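/- arXiv:1809.07020 — 2 statements merged into one kernel-verified Lean document; each statement's English description precedes it below -/
import Mathlib

section
/- Strong maximum principle: Let Ω ⊂ ℝ^N be a bounded domain, s ∈ (0,1), p ∈ (1,∞), V ∈ L¹_loc(Ω). Suppose u ∈ W₀^(s,p)(Ω) is nontrivial, nonnegative, Vu^(p-1) ∈ L¹_loc(Ω), and for all nonnegative v ∈ W₀^(s,p)(Ω) ∩ L^∞_loc(Ω): ∫∫ |u(x)-u(y)|^(p-2)(u(x)-u(y))(v(x)-v(y))/|x-y|^(N+sp) dx dy + ∫_Ω V u^(p-1) v dx ≥ 0. Then u > 0 almost everywhere in Ω. -/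
open MeasureTheory Metric Set Filter

noncomputable section

/-- The Gagliardo `p`-energy `‖u‖^p = ∫∫ |u(x)-u(y)|^p / |x-y|^{N+sp} dx dy`. -/
def gagE (N : ℕ) (s p : ℝ) (u : EuclideanSpace ℝ (Fin N) → ℝ) : ℝ :=
  ∫ x, ∫ y, |u x - u y| ^ p / ‖x - y‖ ^ ((N : ℝ) + s * p)

/-- The Gagliardo norm of `W₀^{s,p}`. -/
def gagNorm (N : ℕ) (s p : ℝ) (u : EuclideanSpace ℝ (Fin N) → ℝ) : ℝ :=
  gagE N s p u ^ (1 / p)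

/-- Membership in `W₀^{s,p}(Ω)`: measurable, finite Gagliardo energy, vanishing outside `Ω`. -/
def memW0 (N : ℕ) (s p : ℝ) (Ω : Set (EuclideanSpace ℝ (Fin N)))
    (u : EuclideanSpace ℝ (Fin N) → ℝ) : Prop :=
  Measurable u ∧
  Integrable (fun z : EuclideanSpace ℝ (Fin N) × EuclideanSpace ℝ (Fin N) =>
    |u z.1 - u z.2| ^ p / ‖z.1 - z.2‖ ^ ((N : ℝ) + s * p)) ∧
  ∀ x, x ∉ Ω → u x = 0

/-- The fractional `p`-Laplacian pairing `⟨A u, v⟩`. -/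
def fracPair (N : ℕ) (s p : ℝ) (u v : EuclideanSpace ℝ (Fin N) → ℝ) : ℝ :=
  ∫ x, ∫ y, |u x - u y| ^ (p - 2) * (u x - u y) * (v x - v y) / ‖x - y‖ ^ ((N : ℝ) + s * p)

/-- `q` is below the critical exponent `p*ₛ = Np/(N-sp)` (`= ∞` if `sp ≥ N`). -/
def subCrit (N : ℕ) (s p q : ℝ) : Prop :=
  s * p < N → q < N * p / ((N : ℝ) - s * p)

/-- The class `W_q`: `h ρ^{sa} ∈ L^r(Ω)` for some `a ∈ [0,q)`, `r ∈ (1,∞)` with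
`1/r + a/p + (q-a)/p*ₛ < 1` (the last term read as `0` when `p*ₛ = ∞`). -/
def inWq (N : ℕ) (Ω : Set (EuclideanSpace ℝ (Fin N))) (s p q : ℝ)
    (h : EuclideanSpace ℝ (Fin N) → ℝ) : Prop :=
  ∃ a r : ℝ, 0 ≤ a ∧ a < q ∧ 1 < r ∧
    ((s * p < N ∧ 1 / r + a / p + (q - a) * ((N : ℝ) - s * p) / ((N : ℝ) * p) < 1) ∨
      (¬ s * p < N ∧ 1 / r + a / p < 1)) ∧
    IntegrableOn (fun x => |h x * infDist x (frontier Ω) ^ (s * a)| ^ r) Ω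

/-- The class `W̃_q`: `h ρ^{sa} ∈ L^r(Ω)` for some `a ∈ [0,1]`, `r ∈ (1,∞)` with
`1/r + a/p + (max{p,q}-a)/p*ₛ < 1`. -/
def inWtq (N : ℕ) (Ω : Set (EuclideanSpace ℝ (Fin N))) (s p q : ℝ)
    (h : EuclideanSpace ℝ (Fin N) → ℝ) : Prop :=
  ∃ a r : ℝ, 0 ≤ a ∧ a ≤ 1 ∧ 1 < r ∧
    ((s * p < N ∧
        1 / r + a / p + (max p q - a) * ((N : ℝ) - s * p) / ((N : ℝ) * p) < 1) ∨
      (¬ s * p < N ∧ 1 / r + a / p < 1)) ∧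
    IntegrableOn (fun x => |h x * infDist x (frontier Ω) ^ (s * a)| ^ r) Ω

/-- Weak convergence `uₙ ⇀ u` in `W₀^{s,p}(Ω)`: bounded Gagliardo norms together with
convergence against all continuous compactly supported test functions (a total family in
the dual `W^{-s,p'}(Ω)`). -/
def weakConv (N : ℕ) (s p : ℝ) (u_ : ℕ → EuclideanSpace ℝ (Fin N) → ℝ)
    (u : EuclideanSpace ℝ (Fin N) → ℝ) : Prop :=
  (∃ M : ℝ, ∀ n, gagNorm N s p (u_ n) ≤ M) ∧
  ∀ φ : EuclideanSpace ℝ (Fin N) → ℝ, Continuous φ → HasCompactSupport φ →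
    Tendsto (fun n => ∫ x, u_ n x * φ x) atTop (nhds (∫ x, u x * φ x))

/-- The first eigenvalue `λ₁ = inf{‖u‖^p : u ∈ W₀^{s,p}(Ω), ∫_Ω h|u|^p = 1}`. -/
def lam1 (N : ℕ) (s p : ℝ) (Ω : Set (EuclideanSpace ℝ (Fin N)))
    (h : EuclideanSpace ℝ (Fin N) → ℝ) : ℝ :=
  sInf {t : ℝ | ∃ u, memW0 N s p Ω u ∧ (∫ x in Ω, h x * |u x| ^ p) = 1 ∧ t = gagE N s p u}

/-- `(λ, u)` is an eigenpair of `(-Δ)ₚˢ u = λ h |u|^{p-2} u` in `Ω`, `u = 0` outside `Ω`. -/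
def isEigenpair (N : ℕ) (s p : ℝ) (Ω : Set (EuclideanSpace ℝ (Fin N)))
    (h : EuclideanSpace ℝ (Fin N) → ℝ) (lam : ℝ)
    (u : EuclideanSpace ℝ (Fin N) → ℝ) : Prop :=
  memW0 N s p Ω u ∧ ¬ (∀ᵐ x ∂volume.restrict Ω, u x = 0) ∧
  ∀ v, memW0 N s p Ω v →
    fracPair N s p u v = lam * ∫ x in Ω, h x * |u x| ^ (p - 2) * u x * v x


lemma aux_max (a b : ℝ) : |max 0 a - max 0 b| ≤ |a - b| := by
  rw [max_comm 0 a, max_comm 0 b]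
  exact abs_max_sub_max_le_abs a b 0

lemma aux_radial (d : ℕ) (hd : 0 < d) (s p r : ℝ) (hs0 : 0 < s) (hs1 : s < 1) (hp : 1 < p)
    (hr : 0 < r) :
    IntegrableOn (fun y : ℝ => y ^ (d - 1) • ((min y r) ^ p / y ^ ((d : ℝ) + s * p))) (Ioi 0) := by
  have hsplit : Ioi (0:ℝ) = Ioc 0 r ∪ Ioi r := (Ioc_union_Ioi_eq_Ioi hr.le).symm
  have hpow : ∀ y : ℝ, 0 < y → y ^ (d - 1) = y ^ ((d:ℝ) - 1) := by
    intro y hy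
    rw [← Real.rpow_natCast, Nat.cast_sub hd]; simp
  rw [hsplit]
  refine IntegrableOn.union ?_ ?_
  · have h1 : IntegrableOn (fun y : ℝ => y ^ (p - 1 - s * p)) (Ioc 0 r) := by
      have := (intervalIntegral.intervalIntegrable_rpow' (a := 0) (b := r)
        (r := p - 1 - s * p) (by nlinarith))
      rwa [intervalIntegrable_iff_integrableOn_Ioc_of_le hr.le] at this
    refine h1.congr_fun (fun y hy => ?_) measurableSet_Ioc
    have hy0 : 0 < y := hy.1
    simp only [smul_eq_mul]
    rw [min_eq_left hy.2, hpow y hy0, ← Real.rpow_sub hy0, ← Real.rpow_add hy0]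
    congr 1; ring
  · have h1 : IntegrableOn (fun y : ℝ => r ^ p * y ^ (-1 - s * p)) (Ioi r) :=
      (integrableOn_Ioi_rpow_of_lt (by nlinarith) hr).const_mul _
    refine h1.congr_fun (fun y hy => ?_) measurableSet_Ioi
    have hy0 : 0 < y := hr.trans hy
    simp only [smul_eq_mul]
    rw [min_eq_right (le_of_lt hy), hpow y hy0, mul_div_assoc', mul_comm (y ^ _) (r ^ p),
      mul_div_assoc, ← Real.rpow_sub hy0]
    congr 2; ring

lemma aux_kernel (N : ℕ) (s p r : ℝ) (hs0 : 0 < s) (hs1 : s < 1) (hp : 1 < p) (hr : 0 < r) :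
    Integrable (fun h : EuclideanSpace ℝ (Fin N) =>
      (min ‖h‖ r) ^ p / ‖h‖ ^ ((N : ℝ) + s * p)) := by
  rcases Nat.eq_zero_or_pos N with h0 | hN
  · subst h0
    have : (fun h : EuclideanSpace ℝ (Fin 0) =>
      (min ‖h‖ r) ^ p / ‖h‖ ^ (((0:ℕ) : ℝ) + s * p)) = fun _ => 0 := by
      funext h
      have : h = 0 := Subsingleton.elim _ _
      subst this
      rw [norm_zero, min_eq_left hr.le, Real.zero_rpow (by linarith)]; simp
    rw [this]
    exact integrable_zero _ _ _
  · have : Nonempty (Fin N) := ⟨⟨0, hN⟩⟩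
    have : Nontrivial (EuclideanSpace ℝ (Fin N)) := inferInstance
    have := (integrable_fun_norm_addHaar (E := EuclideanSpace ℝ (Fin N)) (μ := volume)
      (f := fun y : ℝ => (min y r) ^ p / y ^ ((N : ℝ) + s * p)))
    refine this.2 ?_
    rw [finrank_euclideanSpace_fin]
    exact aux_radial N hN s p r hs0 hs1 hp hr

lemma aux_phi (N : ℕ) (s p r : ℝ) (hs0 : 0 < s) (hs1 : s < 1) (hp : 1 < p) (hr : 0 < r)
    (x0 : EuclideanSpace ℝ (Fin N)) (φ : EuclideanSpace ℝ (Fin N) → ℝ)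
    (hφ : φ = fun x => max 0 (r - dist x x0)) :
    Integrable (fun z : EuclideanSpace ℝ (Fin N) × EuclideanSpace ℝ (Fin N) =>
      |φ z.1 - φ z.2| ^ p / ‖z.1 - z.2‖ ^ ((N : ℝ) + s * p)) := by
  set k : EuclideanSpace ℝ (Fin N) → ℝ := fun h => (min ‖h‖ r) ^ p / ‖h‖ ^ ((N : ℝ) + s * p)
  have hk : Integrable k := aux_kernel N s p r hs0 hs1 hp hr
  set b : EuclideanSpace ℝ (Fin N) → ℝ := (closedBall x0 r).indicator (fun _ => 1)
  have hb : Integrable b := by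
    refine (integrable_indicator_iff measurableSet_closedBall).2 ?_
    exact integrableOn_const (isCompact_closedBall x0 r).measure_lt_top.ne
  have h1 : Integrable (fun z : EuclideanSpace ℝ (Fin N) × EuclideanSpace ℝ (Fin N) =>
      b z.2 * k (z.1 - z.2)) (volume.prod volume) := by
    simpa using hb.convolution_integrand (ContinuousLinearMap.mul ℝ ℝ) hk
  have h2 : Integrable (fun z : EuclideanSpace ℝ (Fin N) × EuclideanSpace ℝ (Fin N) =>
      b z.1 * k (z.2 - z.1)) (volume.prod volume) := h1.swap
  have h3 := h1.add h2
  have hφm : Continuous φ := by rw [hφ]; fun_prop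
  refine h3.mono' ?_ ?_
  · refine Measurable.aestronglyMeasurable ?_
    have := hφm.measurable
    fun_prop
  · refine Eventually.of_forall fun z => ?_
    obtain ⟨x, y⟩ := z
    have hbn : ∀ x, 0 ≤ b x := fun x => indicator_nonneg (fun _ _ => zero_le_one) x
    have hkn : ∀ x, 0 ≤ k x := fun x => by positivity
    have hks : k (y - x) = k (x - y) := by simp only [k, norm_sub_rev]
    simp only [Pi.add_apply, hks]
    rw [Real.norm_of_nonneg (by positivity)]
    have hle1 : |φ x - φ y| ≤ min ‖x - y‖ r := by
      rw [hφ]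
      refine le_min ?_ ?_
      · refine (aux_max _ _).trans ?_
        rw [← dist_eq_norm]
        have := abs_dist_sub_le x y x0
        rw [show r - dist x x0 - (r - dist y x0) = -(dist x x0 - dist y x0) by ring, abs_neg]
        exact this
      · have a1 : max 0 (r - dist x x0) ≤ r := max_le hr.le (by linarith [dist_nonneg (x := x) (y := x0)])
        have a2 : max 0 (r - dist y x0) ≤ r := max_le hr.le (by linarith [dist_nonneg (x := y) (y := x0)])
        have a3 := le_max_left 0 (r - dist x x0)
        have a4 := le_max_left 0 (r - dist y x0)
        simp only
        rw [abs_le]; constructor <;> linarith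
    by_cases hx : x ∈ closedBall x0 r
    · have : b x = 1 := indicator_of_mem hx _
      rw [this]
      have : |φ x - φ y| ^ p / ‖x - y‖ ^ ((N:ℝ) + s * p) ≤ k (x - y) := by
        simp only [k]; gcongr
      nlinarith [mul_nonneg (hbn y) (hkn (x - y))]
    · by_cases hy : y ∈ closedBall x0 r
      · have : b y = 1 := indicator_of_mem hy _
        rw [this]
        have : |φ x - φ y| ^ p / ‖x - y‖ ^ ((N:ℝ) + s * p) ≤ k (x - y) := by
          simp only [k]; gcongr
        nlinarith [mul_nonneg (hbn x) (hkn (x - y))]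
      · have e : ∀ w, w ∉ closedBall x0 r → φ w = 0 := by
          intro w hw
          rw [mem_closedBall, not_le] at hw
          rw [hφ]; exact max_eq_left (by linarith)
        rw [e x hx, e y hy, sub_self, abs_zero, Real.zero_rpow (by linarith), zero_div]
        exact add_nonneg (mul_nonneg (hbn y) (hkn _)) (mul_nonneg (hbn x) (hkn _))

lemma aux_J (p : ℝ) (hp : 1 < p) (a : ℝ) : |(|a| ^ (p - 2) * a)| = |a| ^ (p - 1) := by
  rcases eq_or_ne a 0 with h | h
  · subst h; simp [Real.zero_rpow (by linarith : p - 1 ≠ 0)]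
  · have : 0 < |a| := abs_pos.2 h
    rw [abs_mul, abs_of_nonneg (by positivity : (0:ℝ) ≤ |a| ^ (p - 2)),
      ← Real.rpow_add_one this.ne']
    congr 1; ring

lemma aux_young (p : ℝ) (hp : 1 < p) (a b : ℝ) (ha : 0 ≤ a) (hb : 0 ≤ b) :
    a ^ (p - 1) * b ≤ a ^ p + b ^ p := by
  have key : ∀ m : ℝ, 0 ≤ m → m ^ (p - 1) * m = m ^ p := by
    intro m hm
    rcases hm.eq_or_lt with h | h
    · subst h; simp [Real.zero_rpow (by linarith : p ≠ 0)]
    · rw [← Real.rpow_add_one h.ne']; congr 1; ring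
  have hap : 0 ≤ a ^ p := by positivity
  have hbp : 0 ≤ b ^ p := by positivity
  rcases le_total a b with h | h
  · have : a ^ (p - 1) * b ≤ b ^ (p - 1) * b := by
      gcongr
    rw [key b hb] at this; linarith
  · have : a ^ (p - 1) * b ≤ a ^ (p - 1) * a := by gcongr
    rw [key a ha] at this; linarith

/-- integrability of the pairing integrand -/
lemma aux_pair (N : ℕ) (s p : ℝ) (hp : 1 < p) (u v : EuclideanSpace ℝ (Fin N) → ℝ)
    (hu : Measurable u) (hv : Measurable v)
    (hui : Integrable (fun z : EuclideanSpace ℝ (Fin N) × EuclideanSpace ℝ (Fin N) =>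
      |u z.1 - u z.2| ^ p / ‖z.1 - z.2‖ ^ ((N : ℝ) + s * p)))
    (hvi : Integrable (fun z : EuclideanSpace ℝ (Fin N) × EuclideanSpace ℝ (Fin N) =>
      |v z.1 - v z.2| ^ p / ‖z.1 - z.2‖ ^ ((N : ℝ) + s * p))) :
    Integrable (fun z : EuclideanSpace ℝ (Fin N) × EuclideanSpace ℝ (Fin N) =>
      |u z.1 - u z.2| ^ (p - 2) * (u z.1 - u z.2) * (v z.1 - v z.2) /
        ‖z.1 - z.2‖ ^ ((N : ℝ) + s * p)) := by
  refine (hui.add hvi).mono' ?_ ?_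
  · exact Measurable.aestronglyMeasurable (by fun_prop)
  · refine Eventually.of_forall fun z => ?_
    simp only [Pi.add_apply, Real.norm_eq_abs]
    rw [abs_div, abs_mul, aux_J p hp, ← add_div,
      abs_of_nonneg (by positivity : 0 ≤ ‖z.1 - z.2‖ ^ ((N : ℝ) + s * p))]
    gcongr
    exact aux_young p hp _ _ (abs_nonneg _) (abs_nonneg _)

lemma aux_add_rpow (p : ℝ) (hp : 1 < p) (a b c C : ℝ) (ha : 0 ≤ a) (hb : 0 ≤ b) (hc : 0 ≤ c)
    (hC : 0 ≤ C) (h : c ≤ C * a + b) : c ^ p ≤ (2 * C) ^ p * a ^ p + 2 ^ p * b ^ p := by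
  have h1 : 0 ≤ (2 * C) ^ p * a ^ p := by positivity
  have h2 : 0 ≤ 2 ^ p * b ^ p := by positivity
  rcases le_total (C * a) b with h' | h'
  · have : c ^ p ≤ (2 * b) ^ p := by
      gcongr
      linarith
    rw [Real.mul_rpow (by norm_num) hb] at this; linarith
  · have : c ^ p ≤ (2 * C * a) ^ p := by
      gcongr
      linarith
    rw [Real.mul_rpow (by positivity) ha] at this; linarith

def gcut (n : ℕ) (t : ℝ) : ℝ := max 0 (min 1 (1 - n * t))

lemma gcut_nonneg (n : ℕ) (t : ℝ) : 0 ≤ gcut n t := le_max_left _ _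
lemma gcut_le_one (n : ℕ) (t : ℝ) : gcut n t ≤ 1 := max_le zero_le_one (min_le_left _ _)
lemma gcut_anti (n : ℕ) : Antitone (gcut n) := by
  intro a b hab
  unfold gcut
  gcongr
lemma gcut_lip (n : ℕ) (a b : ℝ) : |gcut n a - gcut n b| ≤ n * |a - b| := by
  unfold gcut
  refine (aux_max _ _).trans ?_
  refine (abs_min_sub_min_le_max 1 _ 1 _).trans ?_
  rw [sub_self, abs_zero, max_eq_right (abs_nonneg _),
    show (1 - n * a - (1 - n * b) : ℝ) = -(n * (a - b)) by ring, abs_neg, abs_mul, Nat.abs_cast]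
lemma gcut_meas (n : ℕ) : Measurable (gcut n) := by unfold gcut; fun_prop
lemma gcut_of_nonpos (n : ℕ) (t : ℝ) (ht : t ≤ 0) : gcut n t = 1 := by
  unfold gcut
  have : (n:ℝ) * t ≤ 0 := mul_nonpos_of_nonneg_of_nonpos (Nat.cast_nonneg _) ht
  rw [min_eq_left (by linarith), max_eq_right zero_le_one]
lemma gcut_tendsto (t : ℝ) : ∀ᶠ n : ℕ in atTop, gcut n t = if t ≤ 0 then 1 else 0 := by
  split_ifs with h
  · exact Eventually.of_forall fun n => gcut_of_nonpos n t h
  · push Not at h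
    obtain ⟨m, hm⟩ := exists_nat_gt (1 / t)
    filter_upwards [eventually_ge_atTop m] with n hn
    have : (1:ℝ) < n * t := by
      rw [div_lt_iff₀ h] at hm
      have : (m:ℝ) ≤ n := by exact_mod_cast hn
      nlinarith
    unfold gcut
    exact max_eq_left ((min_le_right _ _).trans (by linarith))

lemma aux_sign (p : ℝ) (hp : 1 < p) (n : ℕ) (a b f g : ℝ) (hf : 0 ≤ f) :
    |a - b| ^ (p - 2) * (a - b) * (f * gcut n a - g * gcut n b) ≤ |a - b| ^ (p - 1) * |f - g| := by
  have e : f * gcut n a - g * gcut n b = f * (gcut n a - gcut n b) + (f - g) * gcut n b := by ring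
  have h1 : (a - b) * (gcut n a - gcut n b) ≤ 0 := by
    rcases le_total a b with h | h
    · exact mul_nonpos_of_nonpos_of_nonneg (by linarith) (by linarith [gcut_anti n h])
    · exact mul_nonpos_of_nonneg_of_nonpos (by linarith) (by linarith [gcut_anti n h])
  have h2 : |a - b| ^ (p - 2) * (a - b) * (f * (gcut n a - gcut n b)) ≤ 0 := by
    have : 0 ≤ |a - b| ^ (p - 2) * f := by positivity
    nlinarith
  have h3 : |a - b| ^ (p - 2) * (a - b) * ((f - g) * gcut n b) ≤ |a - b| ^ (p - 1) * |f - g| := by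
    refine (le_abs_self _).trans ?_
    rw [abs_mul, aux_J p hp, abs_mul, abs_of_nonneg (gcut_nonneg n b)]
    gcongr
    exact mul_le_of_le_one_right (abs_nonneg _) (gcut_le_one n b)
  rw [e, mul_add]; linarith

/-- strong maximum principle: if `V ∈ L¹_loc(Ω)`, `u ∈ W₀^{s,p}(Ω)` is
nonnegative and nontrivial, `V u^{p-1} ∈ L¹_loc(Ω)`, and for every nonnegative
`v ∈ W₀^{s,p}(Ω) ∩ L^∞_loc(Ω)` one has `⟨A u, v⟩ + ∫_Ω V u^{p-1} v ≥ 0`,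
then `u > 0` a.e. in `Ω`. -/
theorem stmt9 (N : ℕ) (Ω : Set (EuclideanSpace ℝ (Fin N)))
    (hΩo : IsOpen Ω) (hΩc : IsConnected Ω) (hΩb : Bornology.IsBounded Ω)
    (s p : ℝ) (hs0 : 0 < s) (hs1 : s < 1) (hp : 1 < p)
    (V : EuclideanSpace ℝ (Fin N) → ℝ) (hV : LocallyIntegrableOn V Ω)
    (u : EuclideanSpace ℝ (Fin N) → ℝ) (hu : memW0 N s p Ω u)
    (hu0 : ∀ᵐ x ∂volume.restrict Ω, 0 ≤ u x)
    (hunt : ¬ (∀ᵐ x ∂volume.restrict Ω, u x = 0))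
    (hVu : LocallyIntegrableOn (fun x => V x * u x ^ (p - 1)) Ω)
    (hsuper : ∀ v : EuclideanSpace ℝ (Fin N) → ℝ, memW0 N s p Ω v →
      (∀ K : Set (EuclideanSpace ℝ (Fin N)), K ⊆ Ω → IsCompact K →
        ∃ M : ℝ, ∀ x ∈ K, |v x| ≤ M) →
      (∀ x, 0 ≤ v x) →
      0 ≤ fracPair N s p u v + ∫ x in Ω, V x * u x ^ (p - 1) * v x) :
    ∀ᵐ x ∂volume.restrict Ω, 0 < u x := by
  obtain ⟨hum, hui, huz⟩ := hu
  have hu0' : ∀ᵐ x : EuclideanSpace ℝ (Fin N), 0 ≤ u x := by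
    rw [ae_restrict_iff' hΩo.measurableSet] at hu0
    filter_upwards [hu0] with x hx
    by_cases h : x ∈ Ω
    · exact hx h
    · exact (huz x h).ge
  by_contra hcon
  rw [ae_restrict_iff' hΩo.measurableSet, ae_iff] at hcon
  have hset : {a | ¬(a ∈ Ω → 0 < u a)} = {a | a ∈ Ω ∧ u a ≤ 0} := by
    ext a; simp
  rw [hset] at hcon
  obtain ⟨x0, hx0, hpos⟩ := exists_mem_forall_mem_nhdsWithin_pos_measure hcon
  obtain ⟨r, hr, hball⟩ := Metric.nhds_basis_closedBall.mem_iff.1 (hΩo.mem_nhds hx0.1)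
  have hA : 0 < volume (ball x0 r ∩ {a | a ∈ Ω ∧ u a ≤ 0}) :=
    hpos _ (inter_mem (mem_nhdsWithin_of_mem_nhds (ball_mem_nhds x0 hr)) self_mem_nhdsWithin)
  obtain ⟨φ, hφ⟩ : ∃ φ : EuclideanSpace ℝ (Fin N) → ℝ, φ = fun x => max 0 (r - dist x x0) :=
    ⟨_, rfl⟩
  have hφi := aux_phi N s p r hs0 hs1 hp hr x0 φ hφ
  have hφ0 : ∀ x, 0 ≤ φ x := fun x => by rw [hφ]; exact le_max_left _ _
  have hφr : ∀ x, φ x ≤ r := fun x => by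
    rw [hφ]; exact max_le hr.le (by linarith [dist_nonneg (x := x) (y := x0)])
  have hφz : ∀ x, x ∉ closedBall x0 r → φ x = 0 := by
    intro w hw
    rw [mem_closedBall, not_le] at hw
    rw [hφ]; exact max_eq_left (by linarith)
  have hφp : ∀ x ∈ ball x0 r, 0 < φ x := by
    intro x hx
    rw [mem_ball] at hx
    rw [hφ]; exact lt_max_of_lt_right (by linarith)
  have hφm : Measurable φ := by
    have : Continuous φ := by rw [hφ]; fun_prop
    exact this.measurable
  set v : ℕ → EuclideanSpace ℝ (Fin N) → ℝ := fun n x => φ x * gcut n (u x) with hv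
  have hvm : ∀ n, Measurable (v n) := fun n => hφm.mul ((gcut_meas n).comp hum)
  have hv0 : ∀ n x, 0 ≤ v n x := fun n x => mul_nonneg (hφ0 x) (gcut_nonneg _ _)
  have hvle : ∀ n x, v n x ≤ φ x := fun n x => mul_le_of_le_one_right (hφ0 x) (gcut_le_one _ _)
  have hvi : ∀ n, Integrable (fun z : EuclideanSpace ℝ (Fin N) × EuclideanSpace ℝ (Fin N) =>
      |v n z.1 - v n z.2| ^ p / ‖z.1 - z.2‖ ^ ((N : ℝ) + s * p)) := by
    intro n
    have hvmn := hvm n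
    refine ((hui.const_mul ((2 * (r * n)) ^ p)).add (hφi.const_mul (2 ^ p))).mono' ?_ ?_
    · exact Measurable.aestronglyMeasurable (by fun_prop)
    · refine Eventually.of_forall fun z => ?_
      simp only [Pi.add_apply]
      rw [Real.norm_of_nonneg (by positivity), mul_div_assoc', mul_div_assoc', ← add_div]
      gcongr
      refine aux_add_rpow p hp _ _ _ (r * n) (abs_nonneg _) (abs_nonneg _) (abs_nonneg _)
        (by positivity) ?_
      have e : v n z.1 - v n z.2 = φ z.1 * (gcut n (u z.1) - gcut n (u z.2)) +
        (φ z.1 - φ z.2) * gcut n (u z.2) := by simp only [hv]; ring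
      rw [e]
      refine (abs_add_le _ _).trans ?_
      rw [abs_mul, abs_mul, abs_of_nonneg (hφ0 _), abs_of_nonneg (gcut_nonneg _ _), mul_assoc]
      refine add_le_add ?_ (mul_le_of_le_one_right (abs_nonneg _) (gcut_le_one _ _))
      exact mul_le_mul (hφr _) (gcut_lip n _ _) (abs_nonneg _) hr.le
  have hvW : ∀ n, memW0 N s p Ω (v n) := fun n => ⟨hvm n, hvi n, fun x hx => by
    simp only [hv]; rw [hφz x (fun h => hx (hball h)), zero_mul]⟩
  -- the potential term tends to zero
  set T : ℕ → ℝ := fun n => ∫ x in Ω, V x * u x ^ (p - 1) * v n x with hT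
  have hTlim : Tendsto T atTop (nhds 0) := by
    have h0 : (0:ℝ) = ∫ x in Ω, (0:ℝ) := by simp
    rw [h0]
    refine tendsto_integral_of_dominated_convergence
      ((closedBall x0 r).indicator fun x => r * ‖V x * u x ^ (p - 1)‖) ?_ ?_ ?_ ?_
    · intro n
      exact hVu.aestronglyMeasurable.mul (hvm n).aestronglyMeasurable
    · refine Integrable.restrict ?_
      refine (integrable_indicator_iff measurableSet_closedBall).2 ?_
      exact ((hVu.integrableOn_compact_subset hball (isCompact_closedBall x0 r)).norm).const_mul r
    · intro n
      refine Eventually.of_forall fun x => ?_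
      by_cases hx : x ∈ closedBall x0 r
      · rw [indicator_of_mem hx, norm_mul, mul_comm, Real.norm_of_nonneg (hv0 n x)]
        gcongr
        exact (hvle n x).trans (hφr x)
      · rw [indicator_of_notMem hx]
        simp only [hv]; rw [hφz x hx]; simp
    · filter_upwards [hu0] with x hx
      refine tendsto_const_nhds.congr' ?_
      filter_upwards [gcut_tendsto (u x)] with n hn
      simp only [hv]
      rw [hn]
      split_ifs with h
      · rw [le_antisymm h hx, Real.zero_rpow (by linarith)]; simp
      · simp
  set I : ℕ → EuclideanSpace ℝ (Fin N) × EuclideanSpace ℝ (Fin N) → ℝ := fun n z =>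
      |u z.1 - u z.2| ^ (p - 2) * (u z.1 - u z.2) * (v n z.1 - v n z.2) /
        ‖z.1 - z.2‖ ^ ((N : ℝ) + s * p) with hI
  have hIi : ∀ n, Integrable (I n) := fun n =>
    aux_pair N s p hp u (v n) hum (hvm n) hui (hvi n)
  have hIT : ∀ n, -(∫ z, I n z) ≤ T n := by
    intro n
    have h := hsuper (v n) (hvW n) (fun K _ _ => ⟨r, fun x _ => by
      rw [abs_of_nonneg (hv0 n x)]; exact (hvle n x).trans (hφr x)⟩) (hv0 n)
    have : fracPair N s p u (v n) = ∫ z, I n z := by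
      unfold fracPair
      exact (integral_prod (I n) (hIi n)).symm
    rw [this] at h
    simp only [hT]; linarith
  set D : EuclideanSpace ℝ (Fin N) × EuclideanSpace ℝ (Fin N) → ℝ := fun z =>
      |u z.1 - u z.2| ^ (p - 1) * |φ z.1 - φ z.2| / ‖z.1 - z.2‖ ^ ((N : ℝ) + s * p) with hD
  have hDi : Integrable D := by
    refine (aux_pair N s p hp u φ hum hφm hui hφi).norm.congr ?_
    refine Eventually.of_forall fun z => ?_
    simp only [Real.norm_eq_abs, hD]
    rw [abs_div, abs_mul, aux_J p hp,
      abs_of_nonneg (by positivity : 0 ≤ ‖z.1 - z.2‖ ^ ((N : ℝ) + s * p))]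
  have hD0 : ∀ z, 0 ≤ D z := fun z => by positivity
  have hID : ∀ n z, I n z ≤ D z := by
    intro n z
    simp only [hI, hD]
    refine div_le_div_of_nonneg_right ?_ (by positivity)
    exact aux_sign p hp n _ _ _ _ (hφ0 _)
  set w : EuclideanSpace ℝ (Fin N) → ℝ := fun x => φ x * (if u x ≤ 0 then 1 else 0) with hw
  have hwm : Measurable w :=
    hφm.mul (Measurable.ite (measurableSet_le hum measurable_const) measurable_const
      measurable_const)
  set I0 : EuclideanSpace ℝ (Fin N) × EuclideanSpace ℝ (Fin N) → ℝ := fun z =>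
      |u z.1 - u z.2| ^ (p - 2) * (u z.1 - u z.2) * (w z.1 - w z.2) /
        ‖z.1 - z.2‖ ^ ((N : ℝ) + s * p) with hI0
  have hI0m : Measurable I0 := by simp only [hI0]; fun_prop
  have hDm : Measurable D := by simp only [hD]; fun_prop
  have hev : ∀ z, ∀ᶠ n in atTop, I n z = I0 z := by
    intro z
    filter_upwards [gcut_tendsto (u z.1), gcut_tendsto (u z.2)] with n h1 h2
    simp only [hI, hI0, hv, hw, h1, h2]
  have hfatou : ∫⁻ z, ENNReal.ofReal (D z - I0 z) ≤ ∫⁻ z, ENNReal.ofReal (D z) := by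
    have e1 : ∀ z, liminf (fun n => ENNReal.ofReal (D z - I n z)) atTop =
        ENNReal.ofReal (D z - I0 z) := by
      intro z
      refine Tendsto.liminf_eq (tendsto_const_nhds.congr' ?_)
      filter_upwards [hev z] with n hn
      rw [hn]
    have h1 := lintegral_liminf_le' (μ := (volume : Measure (EuclideanSpace ℝ (Fin N) ×
      EuclideanSpace ℝ (Fin N)))) (u := atTop) (f := fun n z => ENNReal.ofReal (D z - I n z))
      (fun n => (hDi.sub (hIi n)).aestronglyMeasurable.aemeasurable.ennreal_ofReal)
    simp only [e1] at h1
    refine h1.trans ?_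
    rw [← ofReal_integral_eq_lintegral_ofReal hDi (Eventually.of_forall hD0)]
    have h2 : Tendsto (fun n => ENNReal.ofReal ((∫ z, D z) + T n)) atTop
        (nhds (ENNReal.ofReal (∫ z, D z))) := by
      refine ENNReal.tendsto_ofReal ?_
      simpa using hTlim.const_add (∫ z, D z)
    rw [← h2.liminf_eq]
    refine liminf_le_liminf (Eventually.of_forall fun n => ?_)
    rw [← ofReal_integral_eq_lintegral_ofReal (f := fun z => D z - I n z) (hDi.sub (hIi n))
      (Eventually.of_forall fun z => sub_nonneg.2 (hID n z)), integral_sub hDi (hIi n)]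
    exact ENNReal.ofReal_le_ofReal (by linarith [hIT n])
  have hfst : ∀ᵐ z : EuclideanSpace ℝ (Fin N) × EuclideanSpace ℝ (Fin N), 0 ≤ u z.1 :=
    Measure.quasiMeasurePreserving_fst.ae hu0'
  have hsnd : ∀ᵐ z : EuclideanSpace ℝ (Fin N) × EuclideanSpace ℝ (Fin N), 0 ≤ u z.2 :=
    Measure.quasiMeasurePreserving_snd.ae hu0'
  have hI0n : ∀ᵐ z, I0 z ≤ 0 := by
    filter_upwards [hfst, hsnd] with z h1 h2
    refine div_nonpos_of_nonpos_of_nonneg ?_ (by positivity)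
    rw [mul_assoc]
    refine mul_nonpos_of_nonneg_of_nonpos (by positivity) ?_
    simp only [hw]
    by_cases c1 : u z.1 ≤ 0 <;> by_cases c2 : u z.2 ≤ 0
    · rw [le_antisymm c1 h1, le_antisymm c2 h2]; simp
    · simp only [c1, c2, if_true, if_false]
      have := hφ0 z.1
      push Not at c2
      nlinarith
    · simp only [c1, c2, if_true, if_false]
      have := hφ0 z.2
      push Not at c1
      nlinarith
    · simp only [c1, c2, if_false]; simp
  have hzero : ∀ᵐ z, I0 z = 0 := by
    have h := ae_eq_of_ae_le_of_lintegral_le (μ := (volume : Measure (EuclideanSpace ℝ (Fin N) ×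
      EuclideanSpace ℝ (Fin N)))) (f := fun z => ENNReal.ofReal (D z))
      (g := fun z => ENNReal.ofReal (D z - I0 z)) ?_ ?_ ?_ hfatou
    · filter_upwards [h, hI0n] with z hz h0
      rw [ENNReal.ofReal_eq_ofReal_iff (hD0 z) (by linarith [hD0 z])] at hz
      linarith
    · filter_upwards [hI0n] with z h0
      exact ENNReal.ofReal_le_ofReal (by linarith)
    · rw [← ofReal_integral_eq_lintegral_ofReal hDi (Eventually.of_forall hD0)]
      exact ENNReal.ofReal_ne_top
    · exact (hDm.sub hI0m).ennreal_ofReal.aemeasurable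
  have hae : ∀ᵐ x : EuclideanSpace ℝ (Fin N), ∀ᵐ y : EuclideanSpace ℝ (Fin N), I0 (x, y) = 0 :=
    Measure.ae_ae_of_ae_prod hzero
  obtain ⟨x, hxA, hx0', hxy⟩ : ∃ x ∈ ball x0 r ∩ {a | a ∈ Ω ∧ u a ≤ 0}, 0 ≤ u x ∧
      ∀ᵐ y : EuclideanSpace ℝ (Fin N), I0 (x, y) = 0 := by
    by_contra hno
    refine hA.ne' ?_
    refine measure_mono_null ?_ (ae_iff.1 (hu0'.and hae))
    intro x hx hx'
    exact hno ⟨x, hx, hx'⟩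
  apply hunt
  refine ae_restrict_of_ae ?_
  have hux : u x = 0 := le_antisymm hxA.2.2 hx0'
  filter_upwards [hxy, hu0'] with y hy hy0
  by_contra hne
  have hypos : 0 < u y := lt_of_le_of_ne hy0 (Ne.symm hne)
  have hxney : x ≠ y := by rintro rfl; exact hne hux
  have hnorm : 0 < ‖x - y‖ := norm_pos_iff.2 (sub_ne_zero.2 hxney)
  have hφx := hφp x hxA.1
  have hden := Real.rpow_pos_of_pos hnorm ((N:ℝ) + s * p)
  have hab : 0 < |0 - u y| ^ (p - 2) :=
    Real.rpow_pos_of_pos (abs_pos.2 (by linarith)) _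
  simp only [hI0, hw, hux, le_refl, not_le.2 hypos, if_true, if_false] at hy
  rw [div_eq_zero_iff] at hy
  rcases hy with hy | hy
  · have : 0 < |0 - u y| ^ (p - 2) * u y * φ x := by positivity
    nlinarith
  · exact hden.ne' hy


end
end

section
/- Let h ∈ W̃_p with |{h > 0}| > 0, and let v be a bounded eigenfunction of the fractional p-Laplacian eigenvalue problem with eigenvalue λ such that v > 0 a.e. in Ω and ∫_Ω h(x) v(x)^p dx > 0. Then λ = λ₁, the first eigenvalue. -/
open MeasureTheory Metric Set Filter

noncomputable section

lemma picone_aux {p a b c d : ℝ} (hp : 1 < p) (hb : 0 < b) (hab : b < a) (hc : 0 ≤ c)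
    (hd : 0 ≤ d) :
    (a - b) ^ (p - 1) * (c ^ p / a ^ (p - 1) - d ^ p / b ^ (p - 1)) ≤ |c - d| ^ p := by
  have ha : 0 < a := hb.trans hab
  have ht : 0 < a - b := sub_pos.2 hab
  have hconv := (convexOn_rpow hp.le).2
    (show |c - d| / (a - b) ∈ Ici (0 : ℝ) by simp only [mem_Ici]; positivity)
    (show d / b ∈ Ici (0 : ℝ) by simp only [mem_Ici]; positivity)
    (show 0 ≤ (a - b) / a by positivity) (show 0 ≤ b / a by positivity) (by field_simp; ring)
  simp only [smul_eq_mul] at hconv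
  have e1 : (a - b) / a * (|c - d| / (a - b)) + b / a * (d / b) = (|c - d| + d) / a := by
    field_simp
  rw [e1] at hconv
  have h1 : (c / a) ^ p ≤ ((|c - d| + d) / a) ^ p := by
    apply Real.rpow_le_rpow (by positivity) _ (by linarith)
    gcongr
    linarith [le_abs_self (c - d)]
  have h2 := h1.trans hconv
  rw [Real.div_rpow hc ha.le, Real.div_rpow (abs_nonneg _) ht.le, Real.div_rpow hd hb.le] at h2
  have key : ∀ x : ℝ, 0 < x → x ^ p = x ^ (p - 1) * x := by
    intro x hx
    rw [← Real.rpow_add_one hx.ne']; congr 1; ring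
  rw [key a ha, key b hb, key (a - b) ht] at h2
  have pa : 0 < a ^ (p - 1) := by positivity
  have pb : 0 < b ^ (p - 1) := by positivity
  have pt : 0 < (a - b) ^ (p - 1) := by positivity
  have h3 : c ^ p / a ^ (p - 1) ≤ |c - d| ^ p / (a - b) ^ (p - 1) + d ^ p / b ^ (p - 1) := by
    have := mul_le_mul_of_nonneg_left h2 ha.le
    have e2 : a * (c ^ p / (a ^ (p - 1) * a)) = c ^ p / a ^ (p - 1) := by field_simp
    have e3 : a * ((a - b) / a * (|c - d| ^ p / ((a - b) ^ (p - 1) * (a - b))) +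
        b / a * (d ^ p / (b ^ (p - 1) * b))) =
        |c - d| ^ p / (a - b) ^ (p - 1) + d ^ p / b ^ (p - 1) := by
      field_simp
    rwa [e2, e3] at this
  have h4 : c ^ p / a ^ (p - 1) - d ^ p / b ^ (p - 1) ≤ |c - d| ^ p / (a - b) ^ (p - 1) := by
    linarith
  calc _ ≤ (a - b) ^ (p - 1) * (|c - d| ^ p / (a - b) ^ (p - 1)) := by gcongr
    _ = _ := by field_simp

lemma picone {p a b c d : ℝ} (hp : 1 < p) (ha : 0 < a) (hb : 0 < b) (hc : 0 ≤ c)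
    (hd : 0 ≤ d) :
    |a - b| ^ (p - 2) * (a - b) * (c ^ p / a ^ (p - 1) - d ^ p / b ^ (p - 1)) ≤ |c - d| ^ p := by
  have key : ∀ x : ℝ, 0 < x → x ^ (p - 2) * x = x ^ (p - 1) := by
    intro x hx
    rw [← Real.rpow_add_one hx.ne']; congr 1; ring
  rcases lt_trichotomy a b with hab | hab | hab
  · have h1 := picone_aux hp ha hab hd hc
    have ht : 0 < b - a := sub_pos.2 hab
    rw [← key _ ht] at h1
    rw [abs_sub_comm a b, abs_of_pos ht, abs_sub_comm c d]
    linarith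
  · subst hab
    simp only [sub_self, mul_zero, zero_mul]
    positivity
  · have h1 := picone_aux hp hb hab hc hd
    have ht : 0 < a - b := sub_pos.2 hab
    rw [← key _ ht] at h1
    rw [abs_of_pos ht]
    exact h1

lemma phi_lip {p k ε : ℝ} (hp : 1 < p) (hk : 0 ≤ k) (hε : 0 < ε) :
    ∃ L : ℝ, 0 ≤ L ∧ ∀ a b c d : ℝ, 0 ≤ a → 0 ≤ b → 0 ≤ c → c ≤ k → 0 ≤ d → d ≤ k →
      |c ^ p / (a + ε) ^ (p - 1) - d ^ p / (b + ε) ^ (p - 1)| ≤ L * (|c - d| + |a - b|) := by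
  set L1 := p * k ^ (p - 1) with hL1
  set L2 := (p - 1) * ε ^ (-(p - 1) - 1) with hL2
  have hL1n : 0 ≤ L1 := by positivity
  have hL2n : 0 ≤ L2 := mul_nonneg (by linarith) (by positivity)
  have A : ∀ c d : ℝ, 0 ≤ c → c ≤ k → 0 ≤ d → d ≤ k → |c ^ p - d ^ p| ≤ L1 * |c - d| := by
    intro c d hc hck hd hdk
    have := Convex.norm_image_sub_le_of_norm_hasDerivWithin_le (f := fun x : ℝ => x ^ p)
      (f' := fun x => p * x ^ (p - 1)) (s := Icc 0 k) (C := L1) (x := d) (y := c)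
      (fun x _ => (Real.hasDerivAt_rpow_const (Or.inr hp.le)).hasDerivWithinAt)
      (by
        intro x hx
        have hx0 := hx.1
        rw [Real.norm_of_nonneg (by positivity)]
        have : x ^ (p - 1) ≤ k ^ (p - 1) := Real.rpow_le_rpow hx.1 hx.2 (by linarith)
        rw [hL1]; gcongr)
      (convex_Icc 0 k) ⟨hd, hdk⟩ ⟨hc, hck⟩
    simpa [Real.norm_eq_abs] using this
  have B : ∀ a b : ℝ, 0 ≤ a → 0 ≤ b →
      |(a + ε) ^ (-(p - 1)) - (b + ε) ^ (-(p - 1))| ≤ L2 * |a - b| := by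
    intro a b ha hb
    have := Convex.norm_image_sub_le_of_norm_hasDerivWithin_le
      (f := fun x : ℝ => x ^ (-(p - 1)))
      (f' := fun x => (-(p - 1)) * x ^ (-(p - 1) - 1)) (s := Ici ε) (C := L2)
      (x := b + ε) (y := a + ε)
      (fun x hx => (Real.hasDerivAt_rpow_const
        (Or.inl (hε.trans_le hx).ne')).hasDerivWithinAt)
      (by
        intro x hx
        have hx0 : 0 < x := hε.trans_le hx
        rw [norm_mul, norm_neg, Real.norm_of_nonneg (by linarith : 0 ≤ p - 1),
          Real.norm_of_nonneg (by positivity)]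
        have : x ^ (-(p - 1) - 1) ≤ ε ^ (-(p - 1) - 1) :=
          Real.rpow_le_rpow_of_nonpos hε hx (by linarith)
        rw [hL2]
        exact mul_le_mul_of_nonneg_left this (by linarith))
      (convex_Ici ε) (by simp [hb]) (by simp [ha])
    simpa [Real.norm_eq_abs] using this
  refine ⟨L1 * ε ^ (-(p - 1)) + k ^ p * L2, by positivity, ?_⟩
  intro a b c d ha hb hc hck hd hdk
  have ea : c ^ p / (a + ε) ^ (p - 1) = c ^ p * (a + ε) ^ (-(p - 1)) := by
    rw [Real.rpow_neg (by positivity), div_eq_mul_inv]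
  have eb : d ^ p / (b + ε) ^ (p - 1) = d ^ p * (b + ε) ^ (-(p - 1)) := by
    rw [Real.rpow_neg (by positivity), div_eq_mul_inv]
  rw [ea, eb]
  have e : c ^ p * (a + ε) ^ (-(p - 1)) - d ^ p * (b + ε) ^ (-(p - 1)) =
      (c ^ p - d ^ p) * (a + ε) ^ (-(p - 1)) +
      d ^ p * ((a + ε) ^ (-(p - 1)) - (b + ε) ^ (-(p - 1))) := by ring
  rw [e]
  have h1 : |(c ^ p - d ^ p) * (a + ε) ^ (-(p - 1))| ≤ L1 * |c - d| * ε ^ (-(p - 1)) := by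
    rw [abs_mul, abs_of_nonneg (by positivity : 0 ≤ (a + ε) ^ (-(p - 1)))]
    have : (a + ε) ^ (-(p - 1)) ≤ ε ^ (-(p - 1)) :=
      Real.rpow_le_rpow_of_nonpos hε (by linarith) (by linarith)
    have := A c d hc hck hd hdk
    gcongr
  have h2 : |d ^ p * ((a + ε) ^ (-(p - 1)) - (b + ε) ^ (-(p - 1)))| ≤
      k ^ p * (L2 * |a - b|) := by
    rw [abs_mul, abs_of_nonneg (by positivity : 0 ≤ d ^ p)]
    have : d ^ p ≤ k ^ p := Real.rpow_le_rpow hd hdk (by linarith)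
    have := B a b ha hb
    gcongr
  refine (abs_add_le _ _).trans ((add_le_add h1 h2).trans ?_)
  have q1 : 0 ≤ L1 * ε ^ (-(p - 1)) * |a - b| := by positivity
  have q2 : 0 ≤ k ^ p * L2 * |c - d| := by positivity
  nlinarith

lemma pow_split {p L a b : ℝ} (hp : 1 < p) (hL : 0 ≤ L) (ha : 0 ≤ a) (hb : 0 ≤ b) :
    (L * (a + b)) ^ p ≤ (L * 2) ^ p * (a ^ p + b ^ p) := by
  have hp0 : 0 ≤ p := by linarith
  have h1 : L * (a + b) ≤ L * 2 * max a b := by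
    have := le_max_left a b
    have := le_max_right a b
    nlinarith
  have hm : 0 ≤ max a b := le_max_of_le_left ha
  calc _ ≤ (L * 2 * max a b) ^ p := Real.rpow_le_rpow (by positivity) h1 hp0
    _ = (L * 2) ^ p * (max a b) ^ p := Real.mul_rpow (by positivity) hm
    _ ≤ _ := by
      gcongr
      have := Real.rpow_nonneg ha p
      have := Real.rpow_nonneg hb p
      rcases max_choice a b with h | h <;> rw [h] <;> linarith

lemma kernel_nonneg (N : ℕ) (q : ℝ) (x y : EuclideanSpace ℝ (Fin N)) :
    0 ≤ ‖x - y‖ ^ q := Real.rpow_nonneg (norm_nonneg _) _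

/-- The test function is in `W₀`. -/
lemma mem_of_lip (N : ℕ) (s p : ℝ) (hp : 1 < p) (Ω : Set (EuclideanSpace ℝ (Fin N)))
    (u v φ : EuclideanSpace ℝ (Fin N) → ℝ) (hu : memW0 N s p Ω u) (hv : memW0 N s p Ω v)
    (hφ : Measurable φ) (h0 : ∀ x, x ∉ Ω → φ x = 0) (L : ℝ) (hL : 0 ≤ L)
    (hlip : ∀ x y, |φ x - φ y| ≤ L * (|u x - u y| + |v x - v y|)) :
    memW0 N s p Ω φ := by
  refine ⟨hφ, ?_, h0⟩
  refine Integrable.mono' ((hu.2.1.add hv.2.1).const_mul ((L * 2) ^ p)) ?_ ?_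
  · refine Measurable.aestronglyMeasurable ?_
    fun_prop
  · refine ae_of_all _ (fun z => ?_)
    have hk := kernel_nonneg N ((N : ℝ) + s * p) z.1 z.2
    rw [Real.norm_of_nonneg (div_nonneg (by positivity) hk)]
    simp only [Pi.add_apply]
    rw [← add_div, ← mul_div_assoc]
    refine div_le_div_of_nonneg_right ?_ hk
    refine (Real.rpow_le_rpow (abs_nonneg _) (hlip z.1 z.2) (by linarith)).trans ?_
    exact pow_split hp hL (abs_nonneg _) (abs_nonneg _)

lemma gagE_eq (N : ℕ) (s p : ℝ) (Ω : Set (EuclideanSpace ℝ (Fin N)))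
    (u : EuclideanSpace ℝ (Fin N) → ℝ) (hu : memW0 N s p Ω u) :
    gagE N s p u = ∫ z : EuclideanSpace ℝ (Fin N) × EuclideanSpace ℝ (Fin N),
      |u z.1 - u z.2| ^ p / ‖z.1 - z.2‖ ^ ((N : ℝ) + s * p) := by
  have h := hu.2.1
  rw [Measure.volume_eq_prod] at h
  rw [Measure.volume_eq_prod, integral_prod _ h]
  rfl

lemma abs_pow_mul {p a : ℝ} (hp : 1 < p) : |a| ^ (p - 2) * |a| = |a| ^ (p - 1) := by
  rcases eq_or_ne a 0 with rfl | ha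
  · rw [abs_zero, mul_zero, Real.zero_rpow (by linarith)]
  · rw [← Real.rpow_add_one (abs_pos.2 ha).ne']; congr 1; ring

lemma abs_pow_mul' {p a : ℝ} (hp : 1 < p) : |a| ^ (p - 1) * |a| = |a| ^ p := by
  rcases eq_or_ne a 0 with rfl | ha
  · rw [abs_zero, mul_zero, Real.zero_rpow (by linarith)]
  · rw [← Real.rpow_add_one (abs_pos.2 ha).ne']; congr 1; ring

lemma young_aux {p a b : ℝ} (hp : 1 < p) :
    |(|a| ^ (p - 2) * a * b)| ≤ |a| ^ p + |b| ^ p := by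
  rw [abs_mul, abs_mul, abs_of_nonneg (by positivity : 0 ≤ |a| ^ (p - 2)), abs_pow_mul hp]
  have ha := Real.rpow_nonneg (abs_nonneg a) p
  have hb := Real.rpow_nonneg (abs_nonneg b) p
  rcases le_total |a| |b| with hab | hab
  · have : |a| ^ (p - 1) * |b| ≤ |b| ^ (p - 1) * |b| := by
      gcongr
    rw [abs_pow_mul' hp] at this
    linarith
  · have : |a| ^ (p - 1) * |b| ≤ |a| ^ (p - 1) * |a| := by gcongr
    rw [abs_pow_mul' hp] at this
    linarith

lemma pair_integrable (N : ℕ) (s p : ℝ) (hp : 1 < p) (Ω : Set (EuclideanSpace ℝ (Fin N)))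
    (u v : EuclideanSpace ℝ (Fin N) → ℝ) (hu : memW0 N s p Ω u) (hv : memW0 N s p Ω v) :
    Integrable (fun z : EuclideanSpace ℝ (Fin N) × EuclideanSpace ℝ (Fin N) =>
      |u z.1 - u z.2| ^ (p - 2) * (u z.1 - u z.2) * (v z.1 - v z.2)
        / ‖z.1 - z.2‖ ^ ((N : ℝ) + s * p)) := by
  have hum := hu.1
  have hvm := hv.1
  refine Integrable.mono' (hu.2.1.add hv.2.1) ?_ ?_
  · refine Measurable.aestronglyMeasurable ?_
    fun_prop
  · refine ae_of_all _ (fun z => ?_)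
    have hk := kernel_nonneg N ((N : ℝ) + s * p) z.1 z.2
    rw [norm_div, Real.norm_of_nonneg hk]
    simp only [Pi.add_apply]
    rw [← add_div]
    exact div_le_div_of_nonneg_right (young_aux hp) hk

lemma fracPair_eq (N : ℕ) (s p : ℝ) (hp : 1 < p) (Ω : Set (EuclideanSpace ℝ (Fin N)))
    (u v : EuclideanSpace ℝ (Fin N) → ℝ) (hu : memW0 N s p Ω u) (hv : memW0 N s p Ω v) :
    fracPair N s p u v = ∫ z : EuclideanSpace ℝ (Fin N) × EuclideanSpace ℝ (Fin N),
      |u z.1 - u z.2| ^ (p - 2) * (u z.1 - u z.2) * (v z.1 - v z.2)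
        / ‖z.1 - z.2‖ ^ ((N : ℝ) + s * p) := by
  have h := pair_integrable N s p hp Ω u v hu hv
  rw [Measure.volume_eq_prod] at h
  rw [Measure.volume_eq_prod, integral_prod _ h]
  rfl

lemma gagE_nonneg (N : ℕ) (s p : ℝ) (u : EuclideanSpace ℝ (Fin N) → ℝ) :
    0 ≤ gagE N s p u :=
  integral_nonneg fun x => integral_nonneg fun y =>
    div_nonneg (by positivity) (kernel_nonneg _ _ _ _)

lemma picone_int (N : ℕ) (s p : ℝ) (hp : 1 < p) (Ω : Set (EuclideanSpace ℝ (Fin N)))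
    (h : EuclideanSpace ℝ (Fin N) → ℝ) (lam : ℝ) (v u : EuclideanSpace ℝ (Fin N) → ℝ)
    (heig : isEigenpair N s p Ω h lam v) (hv0 : ∀ᵐ x, 0 ≤ v x)
    (hu : memW0 N s p Ω u) (k : ℝ) (hu0 : ∀ x, 0 ≤ u x) (huk : ∀ x, u x ≤ k)
    (ε : ℝ) (hε : 0 < ε) :
    lam * ∫ x in Ω, h x * |v x| ^ (p - 2) * v x * (u x ^ p / (max (v x) 0 + ε) ^ (p - 1))
      ≤ gagE N s p u := by
  obtain ⟨hv, -, hE⟩ := heig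
  have hum := hu.1
  have hvm := hv.1
  have hk : 0 ≤ k := (hu0 0).trans (huk 0)
  obtain ⟨L, hL, hlip⟩ := phi_lip hp hk hε
  set φ : EuclideanSpace ℝ (Fin N) → ℝ :=
    fun x => u x ^ p / (max (v x) 0 + ε) ^ (p - 1) with hφd
  have hφ : memW0 N s p Ω φ := by
    refine mem_of_lip N s p hp Ω u v φ hu hv (by fun_prop) ?_ L hL ?_
    · intro x hx
      simp only [hφd, hu.2.2 x hx]
      rw [Real.zero_rpow (by linarith), zero_div]
    · intro x y
      refine (hlip (max (v x) 0) (max (v y) 0) (u x) (u y) (le_max_right _ _) (le_max_right _ _)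
        (hu0 x) (huk x) (hu0 y) (huk y)).trans ?_
      exact mul_le_mul_of_nonneg_left
        (add_le_add le_rfl (abs_max_sub_max_le_abs (v x) (v y) 0)) hL
  rw [← hE φ hφ, fracPair_eq N s p hp Ω v φ hv hφ, gagE_eq N s p Ω u hu]
  refine integral_mono_ae (pair_integrable N s p hp Ω v φ hv hφ) hu.2.1 ?_
  have a1 : ∀ᵐ z : EuclideanSpace ℝ (Fin N) × EuclideanSpace ℝ (Fin N), 0 ≤ v z.1 :=
    (Measure.quasiMeasurePreserving_fst (μ := volume) (ν := volume)).ae hv0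
  have a2 : ∀ᵐ z : EuclideanSpace ℝ (Fin N) × EuclideanSpace ℝ (Fin N), 0 ≤ v z.2 :=
    (Measure.quasiMeasurePreserving_snd (μ := volume) (ν := volume)).ae hv0
  filter_upwards [a1, a2] with z h1 h2
  refine div_le_div_of_nonneg_right ?_ (kernel_nonneg _ _ _ _)
  have := picone hp (a := v z.1 + ε) (b := v z.2 + ε) (c := u z.1) (d := u z.2)
    (by positivity) (by positivity) (hu0 _) (hu0 _)
  simp only [hφd, max_eq_left h1, max_eq_left h2]
  rwa [add_sub_add_right_eq_sub] at this

lemma lower_bdd (N : ℕ) (s p : ℝ) (hp : 1 < p) (Ω : Set (EuclideanSpace ℝ (Fin N)))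
    (hΩ : MeasurableSet Ω)
    (h : EuclideanSpace ℝ (Fin N) → ℝ) (hmeas : Measurable h)
    (lam : ℝ) (v u : EuclideanSpace ℝ (Fin N) → ℝ)
    (heig : isEigenpair N s p Ω h lam v) (hvpos : ∀ᵐ x ∂volume.restrict Ω, 0 < v x)
    (hu : memW0 N s p Ω u) (k : ℝ) (hu0 : ∀ x, 0 ≤ u x) (huk : ∀ x, u x ≤ k)
    (hi : IntegrableOn (fun x => h x * u x ^ p) Ω) :
    lam * ∫ x in Ω, h x * u x ^ p ≤ gagE N s p u := by
  have hum := hu.1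
  have hvm := heig.1.1
  have hv0 : ∀ᵐ x, 0 ≤ v x := by
    filter_upwards [(ae_restrict_iff' hΩ).1 hvpos] with x hx
    by_cases hxo : x ∈ Ω
    · exact (hx hxo).le
    · exact (heig.1.2.2 x hxo).ge
  have hεt : Tendsto (fun n : ℕ => 1 / ((n : ℝ) + 1)) atTop (nhds 0) :=
    tendsto_one_div_add_atTop_nhds_zero_nat
  have lim : Tendsto (fun n : ℕ => ∫ x in Ω, h x * |v x| ^ (p - 2) * v x *
      (u x ^ p / (max (v x) 0 + 1 / ((n : ℝ) + 1)) ^ (p - 1))) atTop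
      (nhds (∫ x in Ω, h x * u x ^ p)) := by
    refine tendsto_integral_of_dominated_convergence (fun x => ‖h x * u x ^ p‖) ?_ hi.norm ?_ ?_
    · intro n
      refine Measurable.aestronglyMeasurable ?_
      fun_prop
    · intro n
      filter_upwards [hvpos] with x hx
      have hn : 0 < 1 / ((n : ℝ) + 1) := by positivity
      have e : h x * |v x| ^ (p - 2) * v x *
          (u x ^ p / (max (v x) 0 + 1 / ((n : ℝ) + 1)) ^ (p - 1)) =
          h x * u x ^ p * (v x ^ (p - 1) / (v x + 1 / ((n : ℝ) + 1)) ^ (p - 1)) := by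
        have := abs_pow_mul (a := v x) hp
        rw [max_eq_left hx.le]
        rw [abs_of_pos hx] at this ⊢
        rw [← this]; ring
      rw [e, norm_mul]
      refine mul_le_of_le_one_right (norm_nonneg _) ?_
      rw [Real.norm_of_nonneg (by positivity)]
      refine div_le_one_of_le₀ ?_ (by positivity)
      exact Real.rpow_le_rpow hx.le (by linarith) (by linarith)
    · filter_upwards [hvpos] with x hx
      have t1 : Tendsto (fun n : ℕ => v x + 1 / ((n : ℝ) + 1)) atTop (nhds (v x)) := by
        simpa using hεt.const_add (v x)
      have t2 := t1.rpow_const (p := p - 1) (Or.inl hx.ne')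
      have t3 := ((tendsto_const_nhds (x := u x ^ p)).div t2 (by positivity)).const_mul
        (h x * |v x| ^ (p - 2) * v x)
      have e : h x * |v x| ^ (p - 2) * v x * (u x ^ p / v x ^ (p - 1)) = h x * u x ^ p := by
        have := abs_pow_mul (a := v x) hp
        rw [abs_of_pos hx] at this ⊢
        rw [← this]
        have : 0 < v x ^ (p - 2) := by positivity
        field_simp
      rw [e] at t3
      simpa [max_eq_left hx.le] using t3
  refine le_of_tendsto (lim.const_mul lam) (Eventually.of_forall fun n => ?_)
  exact picone_int N s p hp Ω h lam v u heig hv0 hu k hu0 huk _ (by positivity)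

lemma lower_all (N : ℕ) (s p : ℝ) (hp : 1 < p) (Ω : Set (EuclideanSpace ℝ (Fin N)))
    (hΩ : MeasurableSet Ω)
    (h : EuclideanSpace ℝ (Fin N) → ℝ) (hmeas : Measurable h)
    (lam : ℝ) (v u : EuclideanSpace ℝ (Fin N) → ℝ)
    (heig : isEigenpair N s p Ω h lam v) (hvpos : ∀ᵐ x ∂volume.restrict Ω, 0 < v x)
    (hu : memW0 N s p Ω u)
    (hi : IntegrableOn (fun x => h x * |u x| ^ p) Ω) :
    lam * ∫ x in Ω, h x * |u x| ^ p ≤ gagE N s p u := by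
  have hum := hu.1
  have hp0 : 0 < p := by linarith
  set w : ℕ → EuclideanSpace ℝ (Fin N) → ℝ := fun n x => min |u x| n with hw
  have hw0 : ∀ n x, 0 ≤ w n x := fun n x => le_min (abs_nonneg _) (Nat.cast_nonneg n)
  have hwle : ∀ n x, w n x ≤ |u x| := fun n x => min_le_left _ _
  have hwm : ∀ n, Measurable (w n) := fun n => hum.abs.min measurable_const
  have hlip : ∀ n x y, |w n x - w n y| ≤ |u x - u y| := fun n x y =>
    (abs_min_sub_min_le_max _ _ _ _).trans (by
      simp only [sub_self, abs_zero]
      exact max_le (abs_abs_sub_abs_le _ _) (abs_nonneg _))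
  have hwW : ∀ n, memW0 N s p Ω (w n) := by
    intro n
    refine mem_of_lip N s p hp Ω u u (w n) hu hu (hwm n) ?_ 1 zero_le_one ?_
    · intro x hx
      simp [hw, hu.2.2 x hx]
    · intro x y
      have := hlip n x y
      have := abs_nonneg (u x - u y)
      linarith
  have hbd : ∀ n x, ‖h x * w n x ^ p‖ ≤ ‖h x * |u x| ^ p‖ := by
    intro n x
    rw [norm_mul, norm_mul, Real.norm_of_nonneg (Real.rpow_nonneg (hw0 n x) p),
      Real.norm_of_nonneg (Real.rpow_nonneg (abs_nonneg _) p)]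
    exact mul_le_mul_of_nonneg_left (Real.rpow_le_rpow (hw0 n x) (hwle n x) hp0.le)
      (norm_nonneg _)
  have hm : ∀ n, AEStronglyMeasurable (fun x => h x * w n x ^ p) (volume.restrict Ω) :=
    fun n => (hmeas.mul ((hwm n).pow_const p)).aestronglyMeasurable
  have lim : Tendsto (fun n : ℕ => ∫ x in Ω, h x * w n x ^ p) atTop
      (nhds (∫ x in Ω, h x * |u x| ^ p)) := by
    refine tendsto_integral_of_dominated_convergence (fun x => ‖h x * |u x| ^ p‖) hm hi.norm
      (fun n => ae_of_all _ (hbd n)) (ae_of_all _ fun x => ?_)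
    refine tendsto_const_nhds.congr' ?_
    obtain ⟨m, hm⟩ := exists_nat_ge |u x|
    filter_upwards [eventually_ge_atTop m] with n hn
    have : |u x| ≤ n := hm.trans (by exact_mod_cast hn)
    simp only [hw, min_eq_left this]
  refine le_of_tendsto (lim.const_mul lam) (Eventually.of_forall fun n => ?_)
  refine (lower_bdd N s p hp Ω hΩ h hmeas lam v (w n) heig hvpos (hwW n) n (hw0 n)
    (fun x => min_le_right _ _) ?_).trans ?_
  · exact Integrable.mono' hi.norm (hm n) (ae_of_all _ (hbd n))
  · rw [gagE_eq N s p Ω _ (hwW n), gagE_eq N s p Ω u hu]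
    refine integral_mono (hwW n).2.1 hu.2.1 fun z => ?_
    exact div_le_div_of_nonneg_right
      (Real.rpow_le_rpow (abs_nonneg _) (hlip n z.1 z.2) hp0.le) (kernel_nonneg _ _ _ _)

/-- for `h ∈ W̃_p` with `|{h > 0} ∩ Ω| > 0`, if `v` is a bounded eigenfunction
with eigenvalue `λ`, `v > 0` a.e. in `Ω` and `∫_Ω h v^p > 0`, then `λ = λ₁`. -/
theorem stmt11 (N : ℕ) (Ω : Set (EuclideanSpace ℝ (Fin N)))
    (hΩo : IsOpen Ω) (hΩc : IsConnected Ω) (hΩb : Bornology.IsBounded Ω)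
    (s p : ℝ) (hs0 : 0 < s) (hs1 : s ≤ 1) (hp : 1 < p)
    (h : EuclideanSpace ℝ (Fin N) → ℝ) (hmeas : Measurable h)
    (hW : inWtq N Ω s p p h)
    (hpos : 0 < volume {x ∈ Ω | 0 < h x})
    (lam : ℝ) (v : EuclideanSpace ℝ (Fin N) → ℝ)
    (heig : isEigenpair N s p Ω h lam v)
    (hbdd : ∃ M : ℝ, ∀ᵐ x ∂volume.restrict Ω, |v x| ≤ M)
    (hvpos : ∀ᵐ x ∂volume.restrict Ω, 0 < v x)
    (hint : 0 < ∫ x in Ω, h x * v x ^ p) :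
    lam = lam1 N s p Ω h := by
  have hp0 : 0 < p := by linarith
  have hvW := heig.1
  have hvm := hvW.1
  have hΩ := hΩo.measurableSet
  set I := ∫ x in Ω, h x * v x ^ p with hI
  -- the eigenvalue identity
  have hEv : gagE N s p v = lam * I := by
    have h1 := heig.2.2 v hvW
    have h2 : fracPair N s p v v = gagE N s p v := by
      unfold fracPair gagE
      congr 1; ext x; congr 1; ext y; congr 1
      rw [← abs_pow_mul' hp, ← abs_pow_mul hp, mul_assoc, mul_assoc, abs_mul_abs_self]
    rw [← h2, h1]
    congr 1
    refine integral_congr_ae ?_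
    filter_upwards [hvpos] with x hx
    have e1 := abs_pow_mul (a := v x) hp
    have e2 := abs_pow_mul' (a := v x) hp
    rw [abs_of_pos hx] at e1 e2 ⊢
    rw [← e2, ← e1]; ring
  -- normalisation of v
  set c : ℝ := I ^ (-(1 / p)) with hc
  have hcpos : 0 < c := Real.rpow_pos_of_pos hint _
  have hcp : c ^ p = I⁻¹ := by
    rw [hc, ← Real.rpow_mul hint.le, ← Real.rpow_neg_one]
    congr 1
    field_simp
  have hmemv : lam ∈ {t : ℝ | ∃ u, memW0 N s p Ω u ∧ (∫ x in Ω, h x * |u x| ^ p) = 1 ∧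
      t = gagE N s p u} := by
    refine ⟨fun x => c * v x, ?_, ?_, ?_⟩
    · refine mem_of_lip N s p hp Ω v v _ hvW hvW (by fun_prop) ?_ c hcpos.le ?_
      · intro x hx
        simp [hvW.2.2 x hx]
      · intro x y
        rw [← mul_sub, abs_mul, abs_of_pos hcpos]
        have := abs_nonneg (v x - v y)
        exact mul_le_mul_of_nonneg_left (by linarith) hcpos.le
    · have : ∫ x in Ω, h x * |c * v x| ^ p = ∫ x in Ω, I⁻¹ * (h x * v x ^ p) := by
        refine integral_congr_ae ?_
        filter_upwards [hvpos] with x hx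
        rw [abs_of_pos (by positivity), Real.mul_rpow hcpos.le hx.le, hcp]; ring
      rw [this, integral_const_mul, ← hI]
      exact inv_mul_cancel₀ hint.ne'
    · have : gagE N s p (fun x => c * v x) = I⁻¹ * gagE N s p v := by
        unfold gagE
        rw [← integral_const_mul]
        congr 1; ext x
        rw [← integral_const_mul]
        congr 1; ext y
        rw [← mul_sub, abs_mul, abs_of_pos hcpos, Real.mul_rpow hcpos.le (abs_nonneg _), hcp,
          mul_div_assoc]
      rw [this, hEv]
      field_simp
  unfold lam1
  refine le_antisymm (le_csInf ⟨_, hmemv⟩ ?_) (csInf_le ⟨0, ?_⟩ hmemv)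
  · rintro t ⟨u, hu, hu1, rfl⟩
    have hi : IntegrableOn (fun x => h x * |u x| ^ p) Ω := by
      by_contra hcon
      rw [integral_undef hcon] at hu1
      exact zero_ne_one hu1
    have := lower_all N s p hp Ω hΩ h hmeas lam v u heig hvpos hu hi
    rwa [hu1, mul_one] at this
  · rintro t ⟨u, -, -, rfl⟩
    exact gagE_nonneg N s p u


end
end
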